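/- Suppose y* ∈ C¹_rd(𝕋;ℝⁿ) is a weak local minimizer of 𝓛 with the right endpoint free: there is δ > 0 such that 𝓛[y*] ≤ 𝓛[y] for every y ∈ C¹_rd(𝕋;ℝⁿ) with y(a) = y*(a) and ‖y − y*‖_{1,∞} < δ (no condition is imposed at t = b). Then the natural boundary condition L_v(ρ(b), y*(ρ(b)), y*^Δ(ρ(b))) = 0 holds. -/

import Mathlib

open Set Filter

noncomputable section

-- Forward jump operator of the set `S`.
open Classical in
def tsSigma (S : Set ℝ) (t : ℝ) : ℝ :=
  if ({s | s ∈ S ∧ t < s}).Nonempty then sInf {s | s ∈ S ∧ t < s} else t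

-- Backward jump operator of the set `S`.
open Classical in
def tsRho (S : Set ℝ) (t : ℝ) : ℝ :=
  if ({s | s ∈ S ∧ s < t}).Nonempty then sSup {s | s ∈ S ∧ s < t} else t

/-- Graininess function. -/
def tsMu (S : Set ℝ) (t : ℝ) : ℝ := tsSigma S t - t

/-- `S^k = S \ (ρ(max S), max S]`. -/
def tsTk (S : Set ℝ) : Set ℝ := S \ Set.Ioc (tsRho S (sSup S)) (sSup S)

/-- Delta differentiability at `t` of `f` regarded as a function on the time scale `S`,
with delta derivative `d`. -/
def deltaDiffAt {E : Type*} [NormedAddCommGroup E] [NormedSpace ℝ E]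
    (S : Set ℝ) (f : ℝ → E) (t : ℝ) (d : E) : Prop :=
  ∀ ε > 0, ∃ δ > 0, ∀ s ∈ S ∩ Set.Ioo (t - δ) (t + δ),
    ‖f (tsSigma S t) - f s - (tsSigma S t - s) • d‖ ≤ ε * |tsSigma S t - s|

/-- rd-continuity of `f` on its domain `S`: continuity (within `S`) at right-dense points and
existence of a finite left-sided limit along `S` at left-dense points. -/
def RdContinuousOn {E : Type*} [NormedAddCommGroup E]
    (S : Set ℝ) (f : ℝ → E) : Prop :=
  ∀ t ∈ S, (tsSigma S t = t → ContinuousWithinAt f S t) ∧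
    (tsRho S t = t → ∃ l : E, Filter.Tendsto f (nhdsWithin t (S ∩ Set.Iio t)) (nhds l))

/-- `y ∈ C¹_rd(T)`, with delta derivative `yd`. -/
def C1rd {E : Type*} [NormedAddCommGroup E] [NormedSpace ℝ E]
    (T : Set ℝ) (y yd : ℝ → E) : Prop :=
  (∀ t ∈ tsTk T, deltaDiffAt T y t (yd t)) ∧ RdContinuousOn (tsTk T) yd

/-- `F` is a delta antiderivative of `f` on the time scale `S`; the delta integral
`∫_c^d f Δt` is `F d - F c` for any such `F`. -/
def IsDeltaAntideriv {E : Type*} [NormedAddCommGroup E] [NormedSpace ℝ E]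
    (S : Set ℝ) (f F : ℝ → E) : Prop :=
  ∀ t ∈ tsTk S, deltaDiffAt S F t (f t)

/-- Sup norm of `f` over the set `S`. -/
def tsSupNorm {E : Type*} [NormedAddCommGroup E] (S : Set ℝ) (f : ℝ → E) : ℝ :=
  sSup ((fun t => ‖f t‖) '' S)

abbrev En (n : ℕ) : Type := EuclideanSpace ℝ (Fin n)

/-!
Delta integrals are Lebesgue integrals of step extensions `f ∘ tsFloor`, so one may differentiate
under the delta integral: the first variation `∫ (⟪L_y, η⟫ + ⟪L_v, η^Δ⟫) Δt` of a weak local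
minimizer vanishes for every `η` with `η(a) = 0`.

Put `c = ρ(b)`, `w = L_v` at `c`, and take `η = Φ • w`, where `Φ` is the delta integral from `a` of
the ramp `φ(t) = max 0 (t - d)` with `d < c`. For `d` near `c` the velocity term is at least
`(‖w‖² / 2) Φ(b)`. The position term is `O((c - d) Φ(b))`: on `[a, c]` this follows from `Φ ≤ Φ(b)`,
while on the last gap `[c, b]` the step extension of `Φ` is frozen at `Φ(c) ≤ (c - d) φ(c)`, and
`Φ(b) ≥ (b - c) φ(c)`. Since `Φ(b) > 0`, the first variation can vanish only if `w = 0`.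
-/

open Topology Asymptotics MeasureTheory

section JumpOperators

variable {S : Set ℝ} {t u : ℝ}

theorem le_tsSigma (S : Set ℝ) (t : ℝ) : t ≤ tsSigma S t := by
  unfold tsSigma
  split_ifs with h
  · exact le_csInf h fun _ hu => hu.2.le
  · exact le_rfl

theorem tsRho_le (S : Set ℝ) (t : ℝ) : tsRho S t ≤ t := by
  unfold tsRho
  split_ifs with h
  · exact csSup_le h fun _ hu => hu.2.le
  · exact le_rfl

theorem tsSigma_le (hu : u ∈ S) (htu : t < u) : tsSigma S t ≤ u := by
  have hmem : u ∈ {s | s ∈ S ∧ t < s} := ⟨hu, htu⟩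
  rw [tsSigma, if_pos ⟨u, hmem⟩]
  exact csInf_le ⟨t, fun _ hs => hs.2.le⟩ hmem

theorem le_tsRho (hu : u ∈ S) (hut : u < t) : u ≤ tsRho S t := by
  have hmem : u ∈ {s | s ∈ S ∧ s < t} := ⟨hu, hut⟩
  rw [tsRho, if_pos ⟨u, hmem⟩]
  exact le_csSup ⟨t, fun _ hs => hs.2.le⟩ hmem

theorem tsRho_mem (hS : IsClosed S) (ht : t ∈ S) : tsRho S t ∈ S := by
  unfold tsRho
  split_ifs with h
  · exact hS.closure_subset_iff.mpr (fun _ hs => hs.1)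
      (csSup_mem_closure h ⟨t, fun _ hs => hs.2.le⟩)
  · exact ht

theorem tsSigma_eq_self_of_mem_upperBounds (ht : t ∈ upperBounds S) : tsSigma S t = t := by
  rw [tsSigma, if_neg]
  rintro ⟨u, hu, htu⟩
  exact (ht hu).not_gt htu

theorem exists_mem_Ioo_of_tsSigma_lt (hne : ∃ s ∈ S, t < s) (hu : tsSigma S t < u) :
    ∃ s ∈ S, t < s ∧ s < u := by
  rw [tsSigma, if_pos (show {s | s ∈ S ∧ t < s}.Nonempty from hne)] at hu
  obtain ⟨s, ⟨hs, hts⟩, hsu⟩ := exists_lt_of_csInf_lt hne hu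
  exact ⟨s, hs, hts, hsu⟩

theorem exists_mem_Ioo_of_lt_tsRho (hne : ∃ s ∈ S, s < t) (hu : u < tsRho S t) :
    ∃ s ∈ S, u < s ∧ s < t := by
  rw [tsRho, if_pos (show {s | s ∈ S ∧ s < t}.Nonempty from hne)] at hu
  obtain ⟨s, ⟨hs, hst⟩, hus⟩ := exists_lt_of_lt_csSup hne hu
  exact ⟨s, hs, hus, hst⟩

theorem nhdsWithin_inter_Ioi_eq_bot (h : t < tsSigma S t) : 𝓝[S ∩ Ioi t] t = ⊥ := by
  rw [← empty_mem_iff_bot]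
  filter_upwards [self_mem_nhdsWithin, mem_nhdsWithin_of_mem_nhds (Iio_mem_nhds h)] with u hu hu'
  exact (tsSigma_le hu.1 hu.2).not_gt hu'

theorem nhdsWithin_inter_Iio_eq_bot (h : tsRho S t < t) : 𝓝[S ∩ Iio t] t = ⊥ := by
  rw [← empty_mem_iff_bot]
  filter_upwards [self_mem_nhdsWithin, mem_nhdsWithin_of_mem_nhds (Ioi_mem_nhds h)] with u hu hu'
  exact (le_tsRho hu.1 hu.2).not_gt hu'

end JumpOperators

section TruncatedTimeScale

variable {T : Set ℝ} {a b s t d : ℝ}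

theorem tsTk_subset : tsTk T ⊆ T := sdiff_subset

theorem tsTk_eq_inter_Iic (hT : BddAbove T) : tsTk T = T ∩ Iic (tsRho T (sSup T)) := by
  ext t
  simp only [tsTk, Set.mem_sdiff, mem_Ioc, mem_inter_iff, mem_Iic, and_congr_right_iff]
  intro ht
  exact ⟨fun h => not_lt.mp fun hlt => h ⟨hlt, le_csSup hT ht⟩, fun h hlt => hlt.1.not_ge h⟩

theorem isCompact_tsTk (hT : IsCompact T) : IsCompact (tsTk T) := by
  rw [tsTk_eq_inter_Iic hT.bddAbove]
  exact hT.inter_right isClosed_Iic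

theorem mem_tsTk_of_le (hT : BddAbove T) (ht : t ∈ tsTk T) (hs : s ∈ T) (hst : s ≤ t) :
    s ∈ tsTk T := by
  rw [tsTk_eq_inter_Iic hT] at ht ⊢
  exact ⟨hs, hst.trans ht.2⟩

theorem isGreatest_tsTk (hT : IsClosed T) (hb : IsGreatest T b) :
    IsGreatest (tsTk T) (tsRho T b) := by
  rw [tsTk_eq_inter_Iic hb.bddAbove, hb.csSup_eq]
  exact ⟨⟨tsRho_mem hT hb.1, mem_Iic.mpr le_rfl⟩, fun _ ht => ht.2⟩

theorem tsSigma_tsRho (hb : IsGreatest T b) : tsSigma T (tsRho T b) = b := by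
  rcases (tsRho_le T b).eq_or_lt with hρ | hρ
  · rw [hρ, tsSigma_eq_self_of_mem_upperBounds hb.2]
  · refine (tsSigma_le hb.1 hρ).antisymm (not_lt.mp fun hlt => ?_)
    obtain ⟨s, hs, hρs, hsb⟩ := exists_mem_Ioo_of_tsSigma_lt ⟨b, hb.1, hρ⟩ hlt
    exact (le_tsRho hs hsb).not_gt hρs

theorem isLeast_tsTk (hT : IsClosed T) (ha : IsLeast T a) (hb : IsGreatest T b) :
    IsLeast (tsTk T) a :=
  ⟨mem_tsTk_of_le hb.bddAbove (isGreatest_tsTk hT hb).1 ha.1 (ha.2 (tsRho_mem hT hb.1)),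
    fun _ ht => ha.2 (tsTk_subset ht)⟩

theorem exists_mem_tsTk_Ioo (hb : IsGreatest T b) (ha : a ∈ T) (hab : a < b)
    (hd : d < tsRho T b) : ∃ t ∈ tsTk T, d < t ∧ t < b := by
  obtain ⟨t, ht, hdt, htb⟩ := exists_mem_Ioo_of_lt_tsRho ⟨a, ha, hab⟩ hd
  refine ⟨t, ?_, hdt, htb⟩
  rw [tsTk_eq_inter_Iic hb.bddAbove, hb.csSup_eq]
  exact ⟨ht, le_tsRho ht htb⟩

theorem tsSigma_tsTk_eq_self (hT : BddAbove T) (h : tsSigma T t = t) :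
    tsSigma (tsTk T) t = t := by
  by_cases hne : ∃ u ∈ tsTk T, t < u
  · obtain ⟨u, hu, htu⟩ := hne
    refine (le_tsSigma _ t).antisymm' (not_lt.mp fun hlt => ?_)
    obtain ⟨s, hs, hts, hsu⟩ := exists_mem_Ioo_of_tsSigma_lt ⟨u, tsTk_subset hu, htu⟩
      (h.trans_lt (lt_min htu hlt))
    have hsK := mem_tsTk_of_le hT hu hs (hsu.le.trans (min_le_left _ _))
    exact (tsSigma_le hsK hts).not_gt (hsu.trans_le (min_le_right _ _))
  · push Not at hne
    exact tsSigma_eq_self_of_mem_upperBounds hne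

end TruncatedTimeScale

section DeltaDerivative

variable {E : Type*} [NormedAddCommGroup E] [NormedSpace ℝ E]
  {S : Set ℝ} {f g : ℝ → E} {t : ℝ} {d e : E}

theorem deltaDiffAt_iff_isLittleO :
    deltaDiffAt S f t d ↔ (fun s => f (tsSigma S t) - f s - (tsSigma S t - s) • d)
      =o[𝓝[S] t] fun s => tsSigma S t - s := by
  simp only [deltaDiffAt, isLittleO_iff, Real.norm_eq_abs]
  refine forall₂_congr fun ε _ => ?_
  rw [(nhdsWithin_hasBasis (nhds_basis_Ioo_pos t) S).eventually_iff]
  simp only [inter_comm S]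

theorem deltaDiffAt.add (hf : deltaDiffAt S f t d) (hg : deltaDiffAt S g t e) :
    deltaDiffAt S (fun s => f s + g s) t (d + e) := by
  rw [deltaDiffAt_iff_isLittleO] at *
  refine (hf.add hg).congr_left fun s => ?_
  module

theorem deltaDiffAt.const_smul (hf : deltaDiffAt S f t d) (c : ℝ) :
    deltaDiffAt S (fun s => c • f s) t (c • d) := by
  rw [deltaDiffAt_iff_isLittleO] at *
  refine (hf.const_smul_left c).congr_left fun s => ?_
  simp only [Pi.smul_apply]
  module

theorem deltaDiffAt.continuousWithinAt (hf : deltaDiffAt S f t d) (ht : t ∈ S) :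
    ContinuousWithinAt f S t := by
  rw [deltaDiffAt_iff_isLittleO] at hf
  have hstep : Tendsto (fun s => tsSigma S t - s) (𝓝[S] t) (𝓝 (tsSigma S t - t)) :=
    ((continuous_const.sub continuous_id).tendsto t).mono_left nhdsWithin_le_nhds
  have hremainder := (isLittleO_one_iff ℝ).mp (hf.trans_isBigO (hstep.isBigO_one ℝ))
  have hlim : Tendsto f (𝓝[S] t)
      (𝓝 (f (tsSigma S t) - (0 + (tsSigma S t - t) • d))) :=
    (tendsto_const_nhds.sub (hremainder.add (hstep.smul_const d))).congr fun s => by abel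
  have hvalue :=
    tendsto_nhds_unique (hlim.mono_left (pure_le_nhdsWithin ht)) (tendsto_pure_nhds f t)
  rwa [ContinuousWithinAt, ← hvalue]

theorem deltaDiffAt_of_lt_tsSigma (ht : t < tsSigma S t) (hf : ContinuousWithinAt f S t)
    (hd : f (tsSigma S t) - f t = (tsSigma S t - t) • d) : deltaDiffAt S f t d := by
  rw [deltaDiffAt_iff_isLittleO]
  have hstep : Tendsto (fun s => tsSigma S t - s) (𝓝[S] t) (𝓝 (tsSigma S t - t)) :=
    ((continuous_const.sub continuous_id).tendsto t).mono_left nhdsWithin_le_nhds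
  have hremainder := (tendsto_const_nhds (x := f (tsSigma S t))).sub hf |>.sub (hstep.smul_const d)
  rw [hd, sub_self] at hremainder
  have hμ : tsSigma S t - t ≠ 0 := sub_ne_zero.mpr ht.ne'
  exact ((isLittleO_const_iff hμ).mpr hremainder).trans_isBigO
    ((isEquivalent_const_iff_tendsto hμ).mpr hstep).isBigO_symm

end DeltaDerivative

section RdContinuity

variable {E F G : Type*} [NormedAddCommGroup E] [NormedAddCommGroup F] [NormedAddCommGroup G]
  {K : Set ℝ} {f : ℝ → E} {g : ℝ → F}

theorem rdContinuousOn_of_continuousOn (hf : ContinuousOn f K) : RdContinuousOn K f := fun t ht =>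
  ⟨fun _ => hf t ht, fun _ => ⟨f t, (hf t ht).mono inter_subset_left⟩⟩

theorem RdContinuousOn.prodMk (hf : RdContinuousOn K f) (hg : RdContinuousOn K g) :
    RdContinuousOn K fun t => (f t, g t) := fun t ht =>
  ⟨fun h => ((hf t ht).1 h).prodMk ((hg t ht).1 h), fun h =>
    let ⟨l, hl⟩ := (hf t ht).2 h
    let ⟨m, hm⟩ := (hg t ht).2 h
    ⟨(l, m), hl.prodMk_nhds hm⟩⟩

theorem RdContinuousOn.comp_continuousOn {φ : ℝ × E → G} (hφ : ContinuousOn φ (K ×ˢ univ))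
    (hf : RdContinuousOn K f) : RdContinuousOn K fun t => φ (t, f t) := by
  intro t ht
  have hcomp : ∀ {s : Set ℝ} {l : E}, s ⊆ K → Tendsto f (𝓝[s] t) (𝓝 l) →
      Tendsto (fun u => φ (u, f u)) (𝓝[s] t) (𝓝 (φ (t, l))) := by
    intro s l hs hl
    refine (hφ (t, l) ⟨ht, mem_univ _⟩).tendsto.comp (tendsto_nhdsWithin_iff.mpr ⟨?_, ?_⟩)
    · exact (tendsto_id.mono_left nhdsWithin_le_nhds).prodMk_nhds hl
    · filter_upwards [self_mem_nhdsWithin] with u hu using ⟨hs hu, mem_univ _⟩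
  exact ⟨fun h => hcomp subset_rfl ((hf t ht).1 h), fun h =>
    let ⟨l, hl⟩ := (hf t ht).2 h
    ⟨φ (t, l), hcomp inter_subset_left hl⟩⟩

theorem RdContinuousOn.add {f' : ℝ → E} (hf : RdContinuousOn K f) (hf' : RdContinuousOn K f') :
    RdContinuousOn K fun t => f t + f' t :=
  (hf.prodMk hf').comp_continuousOn (φ := fun p => p.2.1 + p.2.2) (by fun_prop)

theorem RdContinuousOn.const_smul [NormedSpace ℝ E] (hf : RdContinuousOn K f) (c : ℝ) :
    RdContinuousOn K fun t => c • f t :=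
  hf.comp_continuousOn (φ := fun p => c • p.2) (by fun_prop)

theorem RdContinuousOn.isBounded_image (hK : IsCompact K) (hf : RdContinuousOn K f) :
    Bornology.IsBounded (f '' K) := by
  refine hK.induction_on (p := fun s => Bornology.IsBounded (f '' s)) (by simp)
    (fun s s' hss' hs' => hs'.subset (image_mono hss'))
    (fun s s' hs hs' => by simpa only [image_union] using hs.union hs') fun t ht => ?_
  have hleft : ∃ u ∈ 𝓝[K ∩ Iio t] t, Bornology.IsBounded (f '' u) := by
    rcases (tsRho_le K t).eq_or_lt with hρ | hρ
    · obtain ⟨l, hl⟩ := (hf t ht).2 hρ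
      exact Metric.exists_isBounded_image_of_tendsto hl
    · exact ⟨∅, by rw [nhdsWithin_inter_Iio_eq_bot hρ]; exact mem_bot, by simp⟩
  have hright : ∃ u ∈ 𝓝[K ∩ Ioi t] t, Bornology.IsBounded (f '' u) := by
    rcases (le_tsSigma K t).eq_or_lt with hσ | hσ
    · exact Metric.exists_isBounded_image_of_tendsto
        (((hf t ht).1 hσ.symm).mono inter_subset_left)
    · exact ⟨∅, by rw [nhdsWithin_inter_Ioi_eq_bot hσ]; exact mem_bot, by simp⟩
  obtain ⟨u, hu, hfu⟩ := hleft
  obtain ⟨v, hv, hfv⟩ := hright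
  refine ⟨u ∪ v ∪ {t}, ?_, ?_⟩
  · have hcover : K ⊆ (K ∩ Iio t ∪ K ∩ Ioi t) ∪ {t} := fun s hs => by
      rcases lt_trichotomy s t with h | h | h <;> simp [hs, h]
    refine nhdsWithin_mono t hcover ?_
    rw [nhdsWithin_union, nhdsWithin_union, nhdsWithin_singleton]
    exact union_mem_sup (union_mem_sup hu hv) rfl
  · simpa only [image_union, image_singleton] using
      (hfu.union hfv).union Bornology.isBounded_singleton

theorem RdContinuousOn.exists_norm_le (hK : IsCompact K) (hf : RdContinuousOn K f) :
    ∃ B, ∀ t ∈ K, ‖f t‖ ≤ B :=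
  let ⟨B, hB⟩ := (hf.isBounded_image hK).exists_norm_le
  ⟨B, fun _ ht => hB _ (mem_image_of_mem f ht)⟩

/- Discontinuities occur only at right-scattered points, of which there are countably many. -/
theorem RdContinuousOn.measurable_indicator [MeasurableSpace E] [BorelSpace E]
    (hK : MeasurableSet K) (hf : RdContinuousOn K f) : Measurable (K.indicator f) := by
  classical
  set N := {t | t ∈ K ∧ 𝓝[K ∩ Ioi t] t = ⊥}
  have hN : N.Countable := countable_setOfPred_isolated_right_within
  have hcont : ContinuousOn f (K \ N) := fun t ht => by
    have hσ : tsSigma K t = t :=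
      ((le_tsSigma K t).eq_or_lt.resolve_right fun h =>
        ht.2 ⟨ht.1, nhdsWithin_inter_Ioi_eq_bot h⟩).symm
    exact ((hf t ht.1).1 hσ).mono sdiff_subset
  have hmeas : Measurable ((K \ N).piecewise f 0) :=
    hcont.measurable_piecewise continuousOn_const (hK.diff hN.measurableSet)
  refine hmeas.measurable_of_countable_ne (hN.mono fun t ht => ?_)
  by_contra htN
  exact ht (by by_cases htK : t ∈ K <;> simp [htK, htN])

end RdContinuity

section StepExtension

variable {K : Set ℝ} {s t u : ℝ}

/-- The largest point of the compact set `K` that is at most `s`, where arguments below `min K` are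
sent to `min K`. Composition with `tsFloor K` extends functions on `K` to step functions on `ℝ`. -/
def tsFloor (K : Set ℝ) (s : ℝ) : ℝ := sSup (K ∩ Iic (max s (sInf K)))

theorem isGreatest_tsFloor (hK : IsCompact K) (hne : K.Nonempty) (s : ℝ) :
    IsGreatest (K ∩ Iic (max s (sInf K))) (tsFloor K s) :=
  (hK.inter_right isClosed_Iic).isGreatest_sSup
    ⟨sInf K, hK.sInf_mem hne, mem_Iic.mpr (le_max_right _ _)⟩

theorem tsFloor_mem (hK : IsCompact K) (hne : K.Nonempty) (s : ℝ) : tsFloor K s ∈ K :=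
  (isGreatest_tsFloor hK hne s).1.1

theorem tsFloor_mono (hK : IsCompact K) (hne : K.Nonempty) : Monotone (tsFloor K) := fun s u hsu =>
  (isGreatest_tsFloor hK hne u).2
    ⟨tsFloor_mem hK hne s, (isGreatest_tsFloor hK hne s).1.2.trans (max_le_max_right _ hsu)⟩

theorem tsFloor_mem_Icc (hK : IsCompact K) (hu : u ∈ K) (hus : u ≤ s) : tsFloor K s ∈ Icc u s := by
  have hfloor := isGreatest_tsFloor hK ⟨u, hu⟩ s
  rw [max_eq_left ((csInf_le hK.bddBelow hu).trans hus)] at hfloor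
  exact ⟨hfloor.2 ⟨hu, hus⟩, hfloor.1.2⟩

theorem tsFloor_eq_of_forall_le (hK : IsCompact K) (ht : t ∈ K) (hts : t ≤ s)
    (hgap : ∀ u ∈ K, u ≤ s → u ≤ t) : tsFloor K s = t :=
  have hfloor := tsFloor_mem_Icc hK ht hts
  (hgap _ (tsFloor_mem hK ⟨t, ht⟩ s) hfloor.2).antisymm hfloor.1

end StepExtension

section DeltaIntegral

variable {E : Type*} [NormedAddCommGroup E] {T K : Set ℝ} {f : ℝ → E} {s t : ℝ}

theorem RdContinuousOn.intervalIntegrable_comp_tsFloor [SecondCountableTopology E]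
    (hK : IsCompact K) (hne : K.Nonempty) (hf : RdContinuousOn K f) (x y : ℝ) :
    IntervalIntegrable (fun s => f (tsFloor K s)) volume x y := by
  borelize E
  have hmeas : Measurable fun s => f (tsFloor K s) := by
    simpa only [Function.comp_def, indicator_of_mem (tsFloor_mem hK hne _)] using
      (hf.measurable_indicator hK.measurableSet).comp (tsFloor_mono hK hne).measurable
  obtain ⟨B, hB⟩ := hf.exists_norm_le hK
  exact (intervalIntegrable_const (c := B)).mono_fun' hmeas.aestronglyMeasurable
    (ae_of_all _ fun s => hB _ (tsFloor_mem hK hne s))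

variable [NormedSpace ℝ E]

/-- The delta integral of `f` over `T` from `x` to `y`, realised as the Lebesgue integral of the
step extension of `f`. -/
def deltaIntegral (T : Set ℝ) (f : ℝ → E) (x y : ℝ) : E :=
  ∫ s in x..y, f (tsFloor (tsTk T) s)

@[simp]
theorem deltaIntegral_self (T : Set ℝ) (f : ℝ → E) (x : ℝ) : deltaIntegral T f x x = 0 :=
  intervalIntegral.integral_same

theorem deltaIntegral_tsSigma [CompleteSpace E] (hT : IsCompact T) (ht : t ∈ tsTk T) :
    deltaIntegral T f t (tsSigma T t) = (tsSigma T t - t) • f t := by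
  have hstep : EqOn (fun s => f (tsFloor (tsTk T) s)) (fun _ => f t) (Ioo t (tsSigma T t)) :=
    fun s hs => congrArg f <| tsFloor_eq_of_forall_le (isCompact_tsTk hT) ht hs.1.le
      fun u hu hus => not_lt.mp fun htu => (tsSigma_le (tsTk_subset hu) htu).not_gt
        (hus.trans_lt hs.2)
  rw [deltaIntegral, intervalIntegral.integral_congr_Ioo_of_le (le_tsSigma T t) hstep,
    intervalIntegral.integral_const]

theorem norm_deltaIntegral_le (hT : IsCompact T) (hs : s ∈ T) (ht : t ∈ tsTk T) {C : ℝ}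
    (hC : ∀ u ∈ tsTk T ∩ uIcc s t, ‖f u‖ ≤ C) : ‖deltaIntegral T f s t‖ ≤ C * |t - s| := by
  have hK := isCompact_tsTk hT
  refine intervalIntegral.norm_integral_le_of_norm_le_const fun u hu =>
    hC _ ⟨tsFloor_mem hK ⟨t, ht⟩ u, ?_⟩
  rcases le_total s t with hst | hts
  · rw [uIoc_of_le hst] at hu
    have hsK := mem_tsTk_of_le hT.bddAbove ht hs hst
    rw [uIcc_of_le hst]
    exact Icc_subset_Icc_right hu.2 (tsFloor_mem_Icc hK hsK hu.1.le)
  · rw [uIoc_of_ge hts] at hu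
    rw [uIcc_of_ge hts]
    exact Icc_subset_Icc_right hu.2 (tsFloor_mem_Icc hK ht hu.1.le)

variable [SecondCountableTopology E]

theorem deltaIntegral_add_deltaIntegral (hT : IsCompact T) (hne : (tsTk T).Nonempty)
    (hf : RdContinuousOn (tsTk T) f) (x y z : ℝ) :
    deltaIntegral T f x y + deltaIntegral T f y z = deltaIntegral T f x z :=
  have hint := hf.intervalIntegrable_comp_tsFloor (isCompact_tsTk hT) hne
  intervalIntegral.integral_add_adjacent_intervals (hint x y) (hint y z)

theorem deltaDiffAt_deltaIntegral [CompleteSpace E] (hT : IsCompact T)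
    (hf : RdContinuousOn (tsTk T) f) (x : ℝ) (ht : t ∈ tsTk T) :
    deltaDiffAt T (deltaIntegral T f x) t (f t) := by
  have hint := hf.intervalIntegrable_comp_tsFloor (isCompact_tsTk hT) ⟨t, ht⟩
  have hsub (y z : ℝ) :
      deltaIntegral T f x z - deltaIntegral T f x y = deltaIntegral T f y z :=
    sub_eq_of_eq_add' (deltaIntegral_add_deltaIntegral hT ⟨t, ht⟩ hf x y z).symm
  rcases (le_tsSigma T t).eq_or_lt with hσ | hσ
  · intro ε hε
    have hcont := (hf t ht).1 (tsSigma_tsTk_eq_self hT.bddAbove hσ.symm)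
    obtain ⟨δ, hδ, hclose⟩ := Metric.continuousWithinAt_iff.mp hcont ε hε
    refine ⟨δ, hδ, fun s ⟨hs, hst⟩ => ?_⟩
    have hosc : ‖deltaIntegral T (fun u => f u - f t) s t‖ ≤ ε * |t - s| := by
      refine norm_deltaIntegral_le hT hs ht fun u hu => ?_
      rw [← dist_eq_norm]
      refine (hclose hu.1 ((Real.dist_right_le_of_mem_uIcc hu.2).trans_lt ?_)).le
      rw [Real.dist_eq, abs_sub_lt_iff]
      constructor <;> linarith [hst.1, hst.2]
    rwa [← hσ, hsub, ← intervalIntegral.integral_const (a := s) (b := t) (f t), deltaIntegral,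
      ← intervalIntegral.integral_sub (hint s t) intervalIntegrable_const]
  · refine deltaDiffAt_of_lt_tsSigma hσ ?_ ((hsub _ _).trans (deltaIntegral_tsSigma hT ht))
    exact (intervalIntegral.continuous_primitive hint x).continuousWithinAt

end DeltaIntegral

section DifferentiationUnderDeltaIntegral

variable {W G : Type*} [NormedAddCommGroup W] [NormedSpace ℝ W] [ProperSpace W]
  [NormedAddCommGroup G] {T K : Set ℝ} {u h : ℝ → W}

theorem exists_norm_le_along_line {Ψ : ℝ × W → G} (hK : IsCompact K)
    (hΨ : ContinuousOn Ψ (K ×ˢ univ)) (hu : RdContinuousOn K u) (hh : RdContinuousOn K h) :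
    ∃ C, ∀ t ∈ K, ∀ ε ∈ Metric.ball (0 : ℝ) 1, ‖Ψ (t, u t + ε • h t)‖ ≤ C := by
  obtain ⟨A, hA⟩ := hu.exists_norm_le hK
  obtain ⟨B, hB⟩ := hh.exists_norm_le hK
  obtain ⟨C, hC⟩ := (hK.prod (isCompact_closedBall (0 : W) (A + B))).exists_bound_of_continuousOn
    (hΨ.mono (prod_mono_right (subset_univ _)))
  refine ⟨C, fun t ht ε hε => hC _ ⟨ht, mem_closedBall_zero_iff.mpr ?_⟩⟩
  calc ‖u t + ε • h t‖ ≤ ‖u t‖ + ‖ε‖ * ‖h t‖ := by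
        simpa only [norm_smul] using norm_add_le (u t) (ε • h t)
    _ ≤ A + 1 * B := by
        gcongr
        · exact hA t ht
        · exact (mem_ball_zero_iff.mp hε).le
        · exact hB t ht
    _ = A + B := by rw [one_mul]

theorem hasDerivAt_deltaIntegral_along_line [NormedSpace ℝ G] [SecondCountableTopology G]
    {Λ : ℝ × W → G} {Λ' : ℝ × W → W →L[ℝ] G} (hT : IsCompact T) (hne : (tsTk T).Nonempty)
    (hΛ : ContinuousOn Λ (tsTk T ×ˢ univ)) (hΛ' : ContinuousOn Λ' (tsTk T ×ˢ univ))
    (hdiff : ∀ t ∈ tsTk T, ∀ w, HasFDerivAt (fun z => Λ (t, z)) (Λ' (t, w)) w)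
    (hu : RdContinuousOn (tsTk T) u) (hh : RdContinuousOn (tsTk T) h) (a b : ℝ) :
    HasDerivAt (fun ε : ℝ => deltaIntegral T (fun t => Λ (t, u t + ε • h t)) a b)
      (deltaIntegral T (fun t => Λ' (t, u t) (h t)) a b) 0 := by
  have hK := isCompact_tsTk hT
  have hline (ε : ℝ) : RdContinuousOn (tsTk T) fun t => u t + ε • h t := hu.add (hh.const_smul ε)
  have hint (ε : ℝ) := ((hline ε).comp_continuousOn hΛ).intervalIntegrable_comp_tsFloor hK hne a b
  have happly : ContinuousOn (fun p : ℝ × W × W => Λ' (p.1, p.2.1) p.2.2) (tsTk T ×ˢ univ) :=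
    (hΛ'.comp (f := fun p : ℝ × W × W => (p.1, p.2.1)) (by fun_prop)
      fun p hp => ⟨hp.1, mem_univ _⟩).clm_apply (g := fun p => p.2.2) (by fun_prop)
  have hrate : RdContinuousOn (tsTk T) fun t => Λ' (t, u t + (0 : ℝ) • h t) (h t) :=
    ((hline 0).prodMk hh).comp_continuousOn happly
  obtain ⟨C, hC⟩ := exists_norm_le_along_line hK hΛ' hu hh
  obtain ⟨B, hB⟩ := hh.exists_norm_le hK
  have hbound : ∀ t ∈ tsTk T, ∀ ε ∈ Metric.ball (0 : ℝ) 1,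
      ‖Λ' (t, u t + ε • h t) (h t)‖ ≤ C * B := fun t ht ε hε =>
    (ContinuousLinearMap.le_opNorm _ _).trans <| mul_le_mul (hC t ht ε hε) (hB t ht)
      (norm_nonneg _) ((norm_nonneg _).trans (hC t ht ε hε))
  have hline_deriv (t ε : ℝ) : HasDerivAt (fun ε : ℝ => u t + ε • h t) (h t) ε := by
    simpa only [one_smul, id] using ((hasDerivAt_id ε).smul_const (h t)).const_add (u t)
  have hfloor := tsFloor_mem hK hne
  have hderiv := (intervalIntegral.hasDerivAt_integral_of_dominated_loc_of_deriv_le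
    (Metric.ball_mem_nhds 0 one_pos)
    (.of_forall fun ε => (intervalIntegrable_iff.mp (hint ε)).aestronglyMeasurable) (hint 0)
    (intervalIntegrable_iff.mp
      (hrate.intervalIntegrable_comp_tsFloor hK hne a b)).aestronglyMeasurable
    (.of_forall fun s _ => hbound _ (hfloor s)) intervalIntegrable_const
    (.of_forall fun s _ ε _ =>
      (hdiff _ (hfloor s) _).comp_hasDerivAt ε (hline_deriv (tsFloor (tsTk T) s) ε))).2
  simpa only [deltaIntegral, zero_smul, add_zero] using hderiv

end DifferentiationUnderDeltaIntegral

section Minimizers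

variable {E : Type*} [NormedAddCommGroup E] {T : Set ℝ} {a b : ℝ} {L : ℝ → E → E → ℝ}
  {y yd z zd ys yds η ηd : ℝ → E}

theorem tsSupNorm_le {S : Set ℝ} {B : ℝ} (hS : S.Nonempty) (hB : ∀ t ∈ S, ‖y t‖ ≤ B) :
    tsSupNorm S y ≤ B :=
  csSup_le (hS.image _) (forall_mem_image.mpr hB)

variable [NormedSpace ℝ E]

theorem C1rd.add (hy : C1rd T y yd) (hz : C1rd T z zd) :
    C1rd T (fun t => y t + z t) fun t => yd t + zd t :=
  ⟨fun t ht => (hy.1 t ht).add (hz.1 t ht), hy.2.add hz.2⟩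

theorem C1rd.const_smul (hy : C1rd T y yd) (c : ℝ) :
    C1rd T (fun t => c • y t) fun t => c • yd t :=
  ⟨fun t ht => (hy.1 t ht).const_smul c, hy.2.const_smul c⟩

theorem C1rd.rdContinuousOn (hy : C1rd T y yd) : RdContinuousOn (tsTk T) y :=
  rdContinuousOn_of_continuousOn fun t ht =>
    ((hy.1 t ht).continuousWithinAt (tsTk_subset ht)).mono tsTk_subset

/-- `ys`, with delta derivative `yds`, is a weak local minimizer of `∫ L(t, y, y^Δ) Δt` over
`[a, b]` among the `C¹_rd` functions with prescribed value at `a` and free value at `b`. The delta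
integral is the increment from `a` to `b` of an arbitrary antiderivative. -/
def IsWeakLocalMin (T : Set ℝ) (a b : ℝ) (L : ℝ → E → E → ℝ) (ys yds : ℝ → E) : Prop :=
  ∃ δ > 0, ∀ y yd : ℝ → E, C1rd T y yd → y a = ys a →
    tsSupNorm (tsTk T) (fun t => y t - ys t) + tsSupNorm (tsTk T) (fun t => yd t - yds t) < δ →
    ∀ F G : ℝ → ℝ, IsDeltaAntideriv T (fun t => L t (ys t) (yds t)) F →
      IsDeltaAntideriv T (fun t => L t (y t) (yd t)) G → F b - F a ≤ G b - G a

theorem IsWeakLocalMin.isLocalMin (hT : IsCompact T) (hne : (tsTk T).Nonempty)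
    (hL : ContinuousOn (fun p : ℝ × E × E => L p.1 p.2.1 p.2.2) (tsTk T ×ˢ univ))
    (hys : C1rd T ys yds) (hmin : IsWeakLocalMin T a b L ys yds) (hη : C1rd T η ηd)
    (hηa : η a = 0) :
    IsLocalMin (fun ε : ℝ =>
      deltaIntegral T (fun t => L t (ys t + ε • η t) (yds t + ε • ηd t)) a b) 0 := by
  obtain ⟨δ, hδ, hmin⟩ := hmin
  obtain ⟨A, hA⟩ := hη.rdContinuousOn.exists_norm_le (isCompact_tsTk hT)
  obtain ⟨B, hB⟩ := hη.2.exists_norm_le (isCompact_tsTk hT)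
  have hy (ε : ℝ) : C1rd T (fun t => ys t + ε • η t) fun t => yds t + ε • ηd t :=
    hys.add (hη.const_smul ε)
  have hantideriv (ε : ℝ) : IsDeltaAntideriv T (fun t => L t (ys t + ε • η t) (yds t + ε • ηd t))
      (deltaIntegral T (fun t => L t (ys t + ε • η t) (yds t + ε • ηd t)) a) := fun t ht =>
    deltaDiffAt_deltaIntegral hT
      (((hy ε).rdContinuousOn.prodMk (hy ε).2).comp_continuousOn hL) a ht
  have hdist {x xd : ℝ → E} {C : ℝ} (hC : ∀ t ∈ tsTk T, ‖x t‖ ≤ C) (ε : ℝ) :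
      tsSupNorm (tsTk T) (fun t => xd t + ε • x t - xd t) ≤ |ε| * C :=
    tsSupNorm_le hne fun t ht => by
      rw [add_sub_cancel_left, norm_smul, Real.norm_eq_abs]
      exact mul_le_mul_of_nonneg_left (hC t ht) (abs_nonneg ε)
  have hsmall : ∀ᶠ ε : ℝ in 𝓝 0, |ε| * A + |ε| * B < δ :=
    ContinuousAt.eventually_lt (by fun_prop) continuousAt_const (by simpa using hδ)
  filter_upwards [hsmall] with ε hε
  have hle := hmin _ _ (hy ε) (by rw [hηa, smul_zero, add_zero])
    ((add_le_add (hdist hA ε) (hdist hB ε)).trans_lt hε) _ _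
    (by simpa only [zero_smul, add_zero] using hantideriv 0) (hantideriv ε)
  simpa only [deltaIntegral_self, sub_zero, zero_smul, add_zero] using hle

end Minimizers

section FirstVariation

open scoped InnerProductSpace

variable {E : Type*} [NormedAddCommGroup E] [InnerProductSpace ℝ E] [ProperSpace E]

/-- `L` is a continuous Lagrangian over the time scale `T` with jointly continuous partial gradients
`Ly` and `Lv` in the position and in the velocity. -/
structure IsLagrangian (T : Set ℝ) (L : ℝ → E → E → ℝ) (Ly Lv : ℝ → E → E → E) : Prop where
  continuousOn : ContinuousOn (fun p : ℝ × E × E => L p.1 p.2.1 p.2.2) (T ×ˢ univ)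
  continuousOn_position : ContinuousOn (fun p : ℝ × E × E => Ly p.1 p.2.1 p.2.2) (T ×ˢ univ)
  continuousOn_velocity : ContinuousOn (fun p : ℝ × E × E => Lv p.1 p.2.1 p.2.2) (T ×ˢ univ)
  hasGradientAt_position : ∀ t ∈ T, ∀ y v, HasGradientAt (fun z => L t z v) (Ly t y v) y
  hasGradientAt_velocity : ∀ t ∈ T, ∀ y v, HasGradientAt (fun z => L t y z) (Lv t y v) v

variable {T : Set ℝ} {a b t : ℝ} {L : ℝ → E → E → ℝ} {Ly Lv : ℝ → E → E → E}
  {ys yds η ηd : ℝ → E}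

theorem IsLagrangian.mono {K : Set ℝ} (hL : IsLagrangian T L Ly Lv) (hK : K ⊆ T) :
    IsLagrangian K L Ly Lv where
  continuousOn := hL.continuousOn.mono (prod_mono_left hK)
  continuousOn_position := hL.continuousOn_position.mono (prod_mono_left hK)
  continuousOn_velocity := hL.continuousOn_velocity.mono (prod_mono_left hK)
  hasGradientAt_position t ht := hL.hasGradientAt_position t (hK ht)
  hasGradientAt_velocity t ht := hL.hasGradientAt_velocity t (hK ht)

theorem IsLagrangian.hasFDerivAt (hL : IsLagrangian T L Ly Lv) (ht : t ∈ T) (p : E × E) :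
    HasFDerivAt (fun q : E × E => L t q.1 q.2)
      ((innerSL ℝ (Ly t p.1 p.2)).coprod (innerSL ℝ (Lv t p.1 p.2))) p := by
  have hcont {g : ℝ → E → E → E}
      (hg : ContinuousOn (fun p : ℝ × E × E => g p.1 p.2.1 p.2.2) (T ×ˢ univ)) :
      Continuous fun q : E × E => innerSL ℝ (g t q.1 q.2) :=
    (innerSL ℝ).continuous.comp <| continuousOn_univ.mp <|
      hg.comp (f := fun q : E × E => (t, q)) (by fun_prop) fun q _ => ⟨ht, mem_univ q⟩
  exact (hasStrictFDerivAt_uncurry_coprod (f := L t) (u := p)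
    (f₁ := fun y v => innerSL ℝ (Ly t y v)) (f₂ := fun y v => innerSL ℝ (Lv t y v))
    (.of_forall fun q => (hL.hasGradientAt_position t ht q.1 q.2).hasFDerivAt)
    (.of_forall fun q => (hL.hasGradientAt_velocity t ht q.1 q.2).hasFDerivAt)
    (hcont hL.continuousOn_position).continuousAt
    (hcont hL.continuousOn_velocity).continuousAt).hasFDerivAt

theorem IsWeakLocalMin.firstVariation_eq_zero (hT : IsCompact T) (hne : (tsTk T).Nonempty)
    (hL : IsLagrangian (tsTk T) L Ly Lv) (hys : C1rd T ys yds)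
    (hmin : IsWeakLocalMin T a b L ys yds) (hη : C1rd T η ηd) (hηa : η a = 0) :
    deltaIntegral T
      (fun t => ⟪Ly t (ys t) (yds t), η t⟫_ℝ + ⟪Lv t (ys t) (yds t), ηd t⟫_ℝ) a b = 0 := by
  have hL' : ContinuousOn (fun p : ℝ × E × E => (innerSL ℝ (Ly p.1 p.2.1 p.2.2)).coprod
      (innerSL ℝ (Lv p.1 p.2.1 p.2.2))) (tsTk T ×ˢ univ) :=
    ((innerSL ℝ).continuous.comp_continuousOn hL.continuousOn_position).continuousLinearMapCoprod
      ((innerSL ℝ).continuous.comp_continuousOn hL.continuousOn_velocity)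
  exact (hmin.isLocalMin hT hne hL.continuousOn hys hη hηa).hasDerivAt_eq_zero <|
    hasDerivAt_deltaIntegral_along_line hT hne hL.continuousOn hL'
      (fun t ht => hL.hasFDerivAt ht) (hys.rdContinuousOn.prodMk hys.2)
      (hη.rdContinuousOn.prodMk hη.2) a b

end FirstVariation

section FundamentalLemma

variable {T : Set ℝ} {f φ p q : ℝ → ℝ} {a b d t x y m M : ℝ}

theorem mul_le_deltaIntegral (hT : IsCompact T) (hne : (tsTk T).Nonempty)
    (hf : RdContinuousOn (tsTk T) f) (hxy : x ≤ y)
    (hm : ∀ s ∈ Icc x y, m ≤ f (tsFloor (tsTk T) s)) :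
    (y - x) * m ≤ deltaIntegral T f x y := by
  simpa only [deltaIntegral, intervalIntegral.integral_const, smul_eq_mul] using
    intervalIntegral.integral_mono_on hxy intervalIntegrable_const
      (hf.intervalIntegrable_comp_tsFloor (isCompact_tsTk hT) hne x y) hm

theorem deltaIntegral_le_mul (hT : IsCompact T) (hne : (tsTk T).Nonempty)
    (hf : RdContinuousOn (tsTk T) f) (hxy : x ≤ y)
    (hM : ∀ s ∈ Icc x y, f (tsFloor (tsTk T) s) ≤ M) :
    deltaIntegral T f x y ≤ (y - x) * M := by
  simpa only [deltaIntegral, intervalIntegral.integral_const, smul_eq_mul] using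
    intervalIntegral.integral_mono_on hxy
      (hf.intervalIntegrable_comp_tsFloor (isCompact_tsTk hT) hne x y) intervalIntegrable_const hM

theorem deltaIntegral_le_sub_mul (hT : IsCompact T) (ha : IsLeast (tsTk T) a)
    (hf : RdContinuousOn (tsTk T) f) (hax : a ≤ x) (hdx : d ≤ x) (hM : 0 ≤ M)
    (hzero : ∀ t ∈ tsTk T, t ≤ d → f t ≤ 0) (hle : ∀ t ∈ tsTk T, f t ≤ M) :
    deltaIntegral T f a x ≤ (x - d) * M := by
  have hK := isCompact_tsTk hT
  have hhead : deltaIntegral T f a (max a d) ≤ 0 := by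
    rcases le_total d a with hda | had
    · rw [max_eq_left hda, deltaIntegral_self]
    · rw [max_eq_right had]
      refine (deltaIntegral_le_mul hT ⟨a, ha.1⟩ hf had fun s hs => ?_).trans_eq (mul_zero _)
      exact hzero _ (tsFloor_mem hK ⟨a, ha.1⟩ s) ((tsFloor_mem_Icc hK ha.1 hs.1).2.trans hs.2)
  have htail := deltaIntegral_le_mul hT ⟨a, ha.1⟩ hf (max_le hax hdx)
    fun s _ => hle _ (tsFloor_mem hK ⟨a, ha.1⟩ s)
  have hstart : (x - max a d) * M ≤ (x - d) * M := by
    gcongr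
    exact le_max_right a d
  linarith [deltaIntegral_add_deltaIntegral hT ⟨a, ha.1⟩ hf a (max a d) x]

theorem deltaIntegral_mono_right (hT : IsCompact T) (hne : (tsTk T).Nonempty)
    (hφ : RdContinuousOn (tsTk T) φ) (hnonneg : ∀ t ∈ tsTk T, 0 ≤ φ t) (a : ℝ) :
    Monotone (deltaIntegral T φ a) := fun x y hxy => by
  have hincrement := mul_le_deltaIntegral hT hne hφ hxy (m := 0)
    fun s _ => hnonneg _ (tsFloor_mem (isCompact_tsTk hT) hne s)
  linarith [deltaIntegral_add_deltaIntegral hT hne hφ a x y]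

theorem sub_mul_le_deltaIntegral (hT : IsCompact T) (ha : IsLeast (tsTk T) a)
    (hφ : RdContinuousOn (tsTk T) φ) (hnonneg : ∀ t ∈ tsTk T, 0 ≤ φ t)
    (hmono : MonotoneOn φ (tsTk T)) (ht : t ∈ tsTk T) (hty : t ≤ y) :
    (y - t) * φ t ≤ deltaIntegral T φ a y := by
  have hK := isCompact_tsTk hT
  have htail := mul_le_deltaIntegral hT ⟨t, ht⟩ hφ hty fun s hs =>
    hmono ht (tsFloor_mem hK ⟨t, ht⟩ s) (tsFloor_mem_Icc hK ht hs.1).1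
  have hhead := deltaIntegral_mono_right hT ⟨t, ht⟩ hφ hnonneg a (ha.2 ht)
  rw [deltaIntegral_self] at hhead
  linarith [deltaIntegral_add_deltaIntegral hT ⟨t, ht⟩ hφ a t y]

theorem rdContinuousOn_deltaIntegral {E : Type*} [NormedAddCommGroup E] [NormedSpace ℝ E]
    [CompleteSpace E] [SecondCountableTopology E] {f : ℝ → E} (hT : IsCompact T)
    (hf : RdContinuousOn (tsTk T) f) (a : ℝ) : RdContinuousOn (tsTk T) (deltaIntegral T f a) :=
  C1rd.rdContinuousOn ⟨fun _ ht => deltaDiffAt_deltaIntegral hT hf a ht, hf⟩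

theorem deltaIntegral_deltaIntegral_le (hT : IsCompact T) (ha : IsLeast T a) (hb : IsGreatest T b)
    (hφ : RdContinuousOn (tsTk T) φ) (hnonneg : ∀ t ∈ tsTk T, 0 ≤ φ t)
    (hmono : MonotoneOn φ (tsTk T)) (hd : d ≤ tsRho T b) (hzero : ∀ t ∈ tsTk T, t ≤ d → φ t ≤ 0) :
    deltaIntegral T (deltaIntegral T φ a) a b ≤
      2 * (tsRho T b - d) * deltaIntegral T φ a b := by
  set c := tsRho T b
  set Φ := deltaIntegral T φ a
  have hΦ : RdContinuousOn (tsTk T) Φ := rdContinuousOn_deltaIntegral hT hφ a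
  have hcK := isGreatest_tsTk hT.isClosed hb
  have haK := isLeast_tsTk hT.isClosed ha hb
  have hne : (tsTk T).Nonempty := ⟨a, haK.1⟩
  have hΦmono : Monotone Φ := deltaIntegral_mono_right hT hne hφ hnonneg a
  have hΦa : Φ a = 0 := deltaIntegral_self T φ a
  have hφc : ∀ t ∈ tsTk T, φ t ≤ φ c := fun t ht => hmono ht hcK.1 (hcK.2 ht)
  have hΦzero : ∀ t ∈ tsTk T, t ≤ d → Φ t ≤ 0 := fun t ht htd =>
    (deltaIntegral_le_sub_mul hT haK hφ (haK.2 ht) le_rfl (hnonneg c hcK.1)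
      (fun s hs hst => hzero s hs (hst.trans htd)) hφc).trans_eq (by rw [sub_self, zero_mul])
  have hΦc : Φ c ≤ (c - d) * φ c :=
    deltaIntegral_le_sub_mul hT haK hφ (haK.2 hcK.1) hd (hnonneg c hcK.1) hzero hφc
  have hhead : deltaIntegral T Φ a c ≤ (c - d) * Φ b :=
    deltaIntegral_le_sub_mul hT haK hΦ (haK.2 hcK.1) hd
      (hΦa.symm.trans_le (hΦmono (ha.2 hb.1))) hΦzero fun t ht => hΦmono (hb.2 (tsTk_subset ht))
  have htail : deltaIntegral T Φ c b = (b - c) * Φ c := by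
    simpa only [tsSigma_tsRho hb, smul_eq_mul] using deltaIntegral_tsSigma (f := Φ) hT hcK.1
  have hΦb : (b - c) * φ c ≤ Φ b :=
    sub_mul_le_deltaIntegral hT haK hφ hnonneg hmono hcK.1 (tsRho_le T b)
  calc deltaIntegral T Φ a b = deltaIntegral T Φ a c + (b - c) * Φ c := by
        rw [← htail, deltaIntegral_add_deltaIntegral hT hne hΦ]
    _ ≤ (c - d) * Φ b + (b - c) * ((c - d) * φ c) := by
        have hμ : 0 ≤ b - c := sub_nonneg.mpr (tsRho_le T b)
        gcongr
    _ = (c - d) * Φ b + (c - d) * ((b - c) * φ c) := by ring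
    _ ≤ (c - d) * Φ b + (c - d) * Φ b := by
        gcongr
    _ = 2 * (c - d) * Φ b := by ring

theorem exists_continuous_localized (hT : IsCompact T) (ha : IsLeast T a) (hb : IsGreatest T b)
    (hab : a < b) (hd : d < tsRho T b) :
    ∃ φ : ℝ → ℝ, Continuous φ ∧ (∀ t, 0 ≤ φ t) ∧ (∀ t ≤ d, φ t = 0) ∧
      0 < deltaIntegral T φ a b ∧ deltaIntegral T (deltaIntegral T φ a) a b ≤
        2 * (tsRho T b - d) * deltaIntegral T φ a b := by
  set φ : ℝ → ℝ := fun t => max 0 (t - d)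
  have hcont : Continuous φ := by fun_prop
  have hφ : RdContinuousOn (tsTk T) φ := rdContinuousOn_of_continuousOn hcont.continuousOn
  have hmono : Monotone φ := fun s t hst => max_le_max_left 0 (sub_le_sub_right hst d)
  have hnonneg (t : ℝ) : 0 ≤ φ t := le_max_left _ _
  have hzero (t : ℝ) (ht : t ≤ d) : φ t = 0 := max_eq_left (sub_nonpos.mpr ht)
  obtain ⟨t, ht, hdt, htb⟩ := exists_mem_tsTk_Ioo hb ha.1 hab hd
  refine ⟨φ, hcont, hnonneg, hzero, ?_, ?_⟩
  · exact (mul_pos (sub_pos.mpr htb) (lt_max_of_lt_right (sub_pos.mpr hdt))).trans_le <|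
      sub_mul_le_deltaIntegral hT (isLeast_tsTk hT.isClosed ha hb) hφ (fun t _ => hnonneg t)
        (hmono.monotoneOn _) ht htb.le
  · exact deltaIntegral_deltaIntegral_le hT ha hb hφ (fun t _ => hnonneg t) (hmono.monotoneOn _)
      hd.le fun t _ htd => (hzero t htd).le

theorem RdContinuousOn.eventually_half_le_of_isGreatest {K : Set ℝ} {c : ℝ}
    (hq : RdContinuousOn K q) (hc : IsGreatest K c) (hqc : 0 < q c) :
    ∀ᶠ d in 𝓝 c, ∀ t ∈ K, d < t → q c / 2 ≤ q t := by
  have hcont := (hq c hc.1).1 (tsSigma_eq_self_of_mem_upperBounds hc.2)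
  have hnear : ∀ᶠ t in 𝓝 c, t ∈ K → q c / 2 < q t :=
    eventually_nhdsWithin_iff.mp (hcont.eventually_const_lt (half_lt_self hqc))
  obtain ⟨δ, hδ, hball⟩ := Metric.eventually_nhds_iff.mp hnear
  filter_upwards [Ioi_mem_nhds (sub_lt_self c hδ)] with d hd t ht hdt
  refine (hball ?_ ht).le
  rw [Real.dist_eq, abs_sub_lt_iff]
  constructor <;> linarith [hc.2 ht, mem_Ioi.mp hd]

theorem sub_le_deltaIntegral_weighted {C κ : ℝ} (hT : IsCompact T) (ha : IsLeast (tsTk T) a)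
    (hab : a ≤ b) (hp : RdContinuousOn (tsTk T) p) (hq : RdContinuousOn (tsTk T) q)
    (hφ : RdContinuousOn (tsTk T) φ) (hC : ∀ t ∈ tsTk T, ‖p t‖ ≤ C)
    (hnonneg : ∀ t ∈ tsTk T, 0 ≤ φ t) (hκ : ∀ t ∈ tsTk T, φ t ≠ 0 → κ ≤ q t) :
    κ * deltaIntegral T φ a b - C * deltaIntegral T (deltaIntegral T φ a) a b ≤
      deltaIntegral T (fun t => p t * deltaIntegral T φ a t + q t * φ t) a b := by
  set Φ := deltaIntegral T φ a
  have hΦ : RdContinuousOn (tsTk T) Φ := rdContinuousOn_deltaIntegral hT hφ a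
  have hmem := tsFloor_mem (isCompact_tsTk hT) ⟨a, ha.1⟩
  have hpointwise : ∀ t ∈ tsTk T, κ * φ t - C * Φ t ≤ p t * Φ t + q t * φ t := by
    intro t ht
    have hΦt : 0 ≤ Φ t := (deltaIntegral_self T φ a).symm.trans_le
      (deltaIntegral_mono_right hT ⟨a, ha.1⟩ hφ hnonneg a (ha.2 ht))
    have hpΦ : -C * Φ t ≤ p t * Φ t :=
      mul_le_mul_of_nonneg_right (neg_le_of_abs_le (hC t ht)) hΦt
    have hqφ : κ * φ t ≤ q t * φ t := by
      by_cases hφt : φ t = 0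
      · rw [hφt, mul_zero, mul_zero]
      · exact mul_le_mul_of_nonneg_right (hκ t ht hφt) (hnonneg t ht)
    linarith
  have hint {f : ℝ → ℝ} (hf : RdContinuousOn (tsTk T) f) :=
    hf.intervalIntegrable_comp_tsFloor (isCompact_tsTk hT) ⟨a, ha.1⟩ a b
  have hweighted : RdContinuousOn (tsTk T) fun t => p t * Φ t + q t * φ t :=
    ((hp.prodMk hΦ).prodMk (hq.prodMk hφ)).comp_continuousOn
      (φ := fun z => z.2.1.1 * z.2.1.2 + z.2.2.1 * z.2.2.2) (by fun_prop)
  calc κ * deltaIntegral T φ a b - C * deltaIntegral T Φ a b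
      = deltaIntegral T (fun t => κ * φ t - C * Φ t) a b := by
        simp only [deltaIntegral]
        rw [intervalIntegral.integral_sub ((hint hφ).const_mul κ) ((hint hΦ).const_mul C),
          intervalIntegral.integral_const_mul, intervalIntegral.integral_const_mul]
    _ ≤ deltaIntegral T (fun t => p t * Φ t + q t * φ t) a b :=
        intervalIntegral.integral_mono hab (((hint hφ).const_mul κ).sub ((hint hΦ).const_mul C))
          (hint hweighted) fun s => hpointwise _ (hmem s)

theorem nonpos_of_forall_deltaIntegral_nonpos (hT : IsCompact T) (ha : IsLeast T a)
    (hb : IsGreatest T b) (hab : a < b) (hp : RdContinuousOn (tsTk T) p)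
    (hq : RdContinuousOn (tsTk T) q)
    (hpq : ∀ φ : ℝ → ℝ, Continuous φ → (∀ t, 0 ≤ φ t) →
      deltaIntegral T (fun t => p t * deltaIntegral T φ a t + q t * φ t) a b ≤ 0) :
    q (tsRho T b) ≤ 0 := by
  have hK := isCompact_tsTk hT
  have hcK := isGreatest_tsTk hT.isClosed hb
  have haK := isLeast_tsTk hT.isClosed ha hb
  set c := tsRho T b
  by_contra! hκ
  obtain ⟨C, hC⟩ := hp.exists_norm_le hK
  have hC0 : 0 ≤ C := (norm_nonneg _).trans (hC c hcK.1)
  have hsmall : ∀ᶠ d in 𝓝 c, C * (2 * (c - d)) < q c / 2 :=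
    ContinuousAt.eventually_lt (by fun_prop) continuousAt_const (by simpa using hκ)
  obtain ⟨d, ⟨hqd, hCd⟩, hdc⟩ := (((hq.eventually_half_le_of_isGreatest hcK hκ).and
    hsmall).filter_mono nhdsWithin_le_nhds |>.and (self_mem_nhdsWithin (s := Iio c))).exists
  obtain ⟨φ, hφcont, hφnonneg, hφzero, hΦb, hΦint⟩ := exists_continuous_localized hT ha hb hab hdc
  have hφ : RdContinuousOn (tsTk T) φ := rdContinuousOn_of_continuousOn hφcont.continuousOn
  set Φ := deltaIntegral T φ a
  have hlower : q c / 2 * Φ b - C * deltaIntegral T Φ a b ≤ 0 :=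
    (sub_le_deltaIntegral_weighted hT haK hab.le hp hq hφ hC (fun t _ => hφnonneg t)
      fun t ht hφt => hqd t ht (not_le.mp fun htd => hφt (hφzero t htd))).trans
        (hpq φ hφcont hφnonneg)
  have hupper : C * deltaIntegral T Φ a b ≤ C * (2 * (c - d)) * Φ b := by
    rw [mul_assoc]
    exact mul_le_mul_of_nonneg_left hΦint hC0
  have hstrict : C * (2 * (c - d)) * Φ b < q c / 2 * Φ b := mul_lt_mul_of_pos_right hCd hΦb
  linarith

end FundamentalLemma

section NaturalBoundaryCondition

open scoped InnerProductSpace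

variable {E : Type*} [NormedAddCommGroup E] [InnerProductSpace ℝ E] [ProperSpace E]
  {T : Set ℝ} {a b : ℝ} {L : ℝ → E → E → ℝ} {Ly Lv : ℝ → E → E → E} {ys yds : ℝ → E}

theorem IsWeakLocalMin.scalar_firstVariation_eq_zero (hT : IsCompact T)
    (hne : (tsTk T).Nonempty) (hL : IsLagrangian (tsTk T) L Ly Lv) (hys : C1rd T ys yds)
    (hmin : IsWeakLocalMin T a b L ys yds) {φ : ℝ → ℝ} (hφ : Continuous φ) (w : E) :
    deltaIntegral T (fun t => ⟪Ly t (ys t) (yds t), w⟫_ℝ * deltaIntegral T φ a t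
      + ⟪Lv t (ys t) (yds t), w⟫_ℝ * φ t) a b = 0 := by
  have hφw : RdContinuousOn (tsTk T) fun t => φ t • w :=
    rdContinuousOn_of_continuousOn (by fun_prop)
  have hη : deltaIntegral T (fun t => φ t • w) a = fun t => deltaIntegral T φ a t • w :=
    funext fun t => intervalIntegral.integral_smul_const _ w
  have hvariation := hmin.firstVariation_eq_zero hT hne hL hys
    ⟨fun t ht => deltaDiffAt_deltaIntegral hT hφw a ht, hφw⟩ (deltaIntegral_self T _ a)
  simpa only [hη, real_inner_smul_right, mul_comm] using hvariation

theorem natural_boundary_condition_right_endpoint_free_general (hT : IsCompact T)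
    (ha : IsLeast T a) (hb : IsGreatest T b) (hab : a < b) (hL : IsLagrangian T L Ly Lv)
    (hys : C1rd T ys yds) (hmin : IsWeakLocalMin T a b L ys yds) :
    Lv (tsRho T b) (ys (tsRho T b)) (yds (tsRho T b)) = 0 := by
  have hLK := hL.mono tsTk_subset
  have hne : (tsTk T).Nonempty := ⟨_, (isGreatest_tsTk hT.isClosed hb).1⟩
  set w := Lv (tsRho T b) (ys (tsRho T b)) (yds (tsRho T b))
  have hrd {g : ℝ → E → E → E}
      (hg : ContinuousOn (fun p : ℝ × E × E => g p.1 p.2.1 p.2.2) (tsTk T ×ˢ univ)) :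
      RdContinuousOn (tsTk T) fun t => ⟪g t (ys t) (yds t), w⟫_ℝ :=
    (hys.rdContinuousOn.prodMk hys.2).comp_continuousOn
      (φ := fun p : ℝ × E × E => ⟪g p.1 p.2.1 p.2.2, w⟫_ℝ) (hg.inner continuousOn_const)
  have hwnonpos : ⟪w, w⟫_ℝ ≤ 0 :=
    nonpos_of_forall_deltaIntegral_nonpos hT ha hb hab (hrd hLK.continuousOn_position)
      (hrd hLK.continuousOn_velocity) fun φ hφ _ =>
        (hmin.scalar_firstVariation_eq_zero hT hne hLK hys hφ w).le
  exact real_inner_self_nonpos.mp hwnonpos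

end NaturalBoundaryCondition

theorem natural_boundary_condition_right_endpoint_free
    {n : ℕ} (hn : 1 ≤ n)
    (T₀ : Set ℝ) (hT₀closed : IsClosed T₀)
    (a b : ℝ) (ha : a ∈ T₀) (hb : b ∈ T₀) (hab : a < b)
    (T : Set ℝ) (hT : T = Icc a b ∩ T₀)
    (hT3 : ∃ c ∈ T, c ≠ a ∧ c ≠ b)
    (L : ℝ → En n → En n → ℝ) (Ly Lv : ℝ → En n → En n → En n)
    (hLc : ContinuousOn (fun p : ℝ × En n × En n => L p.1 p.2.1 p.2.2)
      (T ×ˢ (univ : Set (En n × En n))))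
    (hLC2 : ∀ t ∈ T, ContDiff ℝ 2 (fun p : En n × En n => L t p.1 p.2))
    (hLy : ∀ t ∈ T, ∀ y v : En n, HasGradientAt (fun z => L t z v) (Ly t y v) y)
    (hLv : ∀ t ∈ T, ∀ y v : En n, HasGradientAt (fun z => L t y z) (Lv t y v) v)
    (hLyc : ContinuousOn (fun p : ℝ × En n × En n => Ly p.1 p.2.1 p.2.2)
      (T ×ˢ (univ : Set (En n × En n))))
    (hLvc : ContinuousOn (fun p : ℝ × En n × En n => Lv p.1 p.2.1 p.2.2)
      (T ×ˢ (univ : Set (En n × En n))))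
    (ys yds : ℝ → En n) (hys : C1rd T ys yds)
    (hmin : ∃ δ > 0, ∀ y yd : ℝ → En n, C1rd T y yd →
      y a = ys a →
      tsSupNorm (tsTk T) (fun t => y t - ys t)
        + tsSupNorm (tsTk T) (fun t => yd t - yds t) < δ →
      ∀ F G : ℝ → ℝ,
        IsDeltaAntideriv T (fun t => L t (ys t) (yds t)) F →
        IsDeltaAntideriv T (fun t => L t (y t) (yd t)) G →
        F b - F a ≤ G b - G a) :
    Lv (tsRho T b) (ys (tsRho T b)) (yds (tsRho T b)) = 0 := by
  subst hT
  exact natural_boundary_condition_right_endpoint_free_general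
    (isCompact_Icc.inter_right hT₀closed) ⟨⟨left_mem_Icc.mpr hab.le, ha⟩, fun _ ht => ht.1.1⟩
    ⟨⟨right_mem_Icc.mpr hab.le, hb⟩, fun _ ht => ht.1.2⟩ hab ⟨hLc, hLyc, hLvc, hLy, hLv⟩ hys hmin
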